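/- Let r, s, t be positive integers with r ≤ s, s + r ≤ t, and t + s + r ≤ min{N₁, N₂}. Suppose the linear map 𝓐 : ℝ^{N₁×N₂} → ℝ^m satisfies the modified rank-restricted isometry property of order t + s + r with constants 0 < α ≤ β, and let γ ≥ 1 satisfy β/α ≤ γ. Let Z ∈ ℝ^{N₁×N₂} be a nonzero matrix with rank(Z) ≤ s + r, and let W be a best rank-t approximation of 𝓐*(sgn(𝓐(Z))). Then W ≠ 0 and (1/(4γ²))·‖𝓐(W)‖₁²/‖W‖_F² ≤ ‖W‖_F²; in particular, max{‖W‖_F², (1/(4γ²))·‖𝓐(W)‖₁²/‖W‖_F²} = ‖W‖_F². -/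

import Mathlib

noncomputable def frobNorm {N₁ N₂ : ℕ} (Z : Matrix (Fin N₁) (Fin N₂) ℝ) : ℝ :=
  Real.sqrt (∑ i, ∑ j, (Z i j) ^ 2)

def frobInner {N₁ N₂ : ℕ} (A B : Matrix (Fin N₁) (Fin N₂) ℝ) : ℝ :=
  ∑ i, ∑ j, A i j * B i j

def l1norm {m : ℕ} (v : Fin m → ℝ) : ℝ := ∑ i, |v i|

noncomputable def sgnVec {m : ℕ} (v : Fin m → ℝ) : Fin m → ℝ := fun i => Real.sign (v i)

def IsBestRankApprox {N₁ N₂ : ℕ} (k : ℕ) (Z H : Matrix (Fin N₁) (Fin N₂) ℝ) : Prop :=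
  H.rank ≤ k ∧
    ∀ W : Matrix (Fin N₁) (Fin N₂) ℝ, W.rank ≤ k → frobNorm (Z - H) ≤ frobNorm (Z - W)

/-! Matrices of rank at most `k` are closed under all real scalings. If `W` is a nearest point to
`M` in such a set, minimality along the line through `W` gives `⟪M, W⟫ = ‖W‖²`, and then
minimality along the line through any `X` in the set gives `|⟪M, X⟫| ≤ ‖W‖ ‖X‖`. For
`M = 𝓐*(sgn (𝓐 Z))` and `X = Z` the inner product is `‖𝓐 Z‖₁ ≥ α ‖Z‖`, whence `α ≤ ‖W‖`. The upper
isometry bound then yields `‖𝓐 W‖₁ ≤ β ‖W‖ ≤ γ α ‖W‖ ≤ γ ‖W‖²`, so even `1 / γ²` works in place of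
`1 / (4 γ²)`. -/

section NearestPoint

open scoped RealInnerProductSpace

variable {E : Type*} [NormedAddCommGroup E] [InnerProductSpace ℝ E] {m w x : E}

lemma inner_sq_le_of_forall_norm_sub_le (hx : ∀ c : ℝ, ‖m - w‖ ≤ ‖m - c • x‖) :
    ⟪m, x⟫ ^ 2 ≤ ‖x‖ ^ 2 * (2 * ⟪m, w⟫ - ‖w‖ ^ 2) := by
  have hquad (c : ℝ) :
      0 ≤ ‖x‖ ^ 2 * (c * c) + (-2 * ⟪m, x⟫) * c + (2 * ⟪m, w⟫ - ‖w‖ ^ 2) := by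
    have hsq : ‖m - w‖ ^ 2 ≤ ‖m - c • x‖ ^ 2 := by gcongr; exact hx c
    rw [norm_sub_sq_real, norm_sub_sq_real, real_inner_smul_right, norm_smul, mul_pow,
      Real.norm_eq_abs, sq_abs] at hsq
    linarith
  have hdiscrim := discrim_le_zero hquad
  rw [discrim] at hdiscrim
  linarith

lemma inner_eq_norm_sq_of_forall_norm_sub_le (hw : ∀ c : ℝ, ‖m - w‖ ≤ ‖m - c • w‖) :
    ⟪m, w⟫ = ‖w‖ ^ 2 := by
  have hsq : (⟪m, w⟫ - ‖w‖ ^ 2) ^ 2 ≤ 0 := by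
    linarith [inner_sq_le_of_forall_norm_sub_le hw]
  exact sub_eq_zero.mp (sq_nonpos_iff _ |>.mp hsq)

lemma abs_inner_le_of_forall_norm_sub_le (hw : ∀ c : ℝ, ‖m - w‖ ≤ ‖m - c • w‖)
    (hx : ∀ c : ℝ, ‖m - w‖ ≤ ‖m - c • x‖) :
    |⟪m, x⟫| ≤ ‖w‖ * ‖x‖ := by
  refine abs_le_of_sq_le_sq ?_ (by positivity)
  calc ⟪m, x⟫ ^ 2 ≤ ‖x‖ ^ 2 * (2 * ⟪m, w⟫ - ‖w‖ ^ 2) := inner_sq_le_of_forall_norm_sub_le hx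
    _ = (‖w‖ * ‖x‖) ^ 2 := by rw [inner_eq_norm_sq_of_forall_norm_sub_le hw]; ring

end NearestPoint

section Frobenius

open scoped RealInnerProductSpace

variable {N₁ N₂ : ℕ}

lemma norm_toLp_vec (X : Matrix (Fin N₁) (Fin N₂) ℝ) : ‖WithLp.toLp 2 X.vec‖ = frobNorm X := by
  simp only [EuclideanSpace.norm_eq, frobNorm, Matrix.vec, Real.norm_eq_abs, sq_abs,
    Fintype.sum_prod_type_right]

lemma inner_toLp_vec (X Y : Matrix (Fin N₁) (Fin N₂) ℝ) :
    ⟪WithLp.toLp 2 X.vec, WithLp.toLp 2 Y.vec⟫ = frobInner X Y := by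
  simp only [PiLp.inner_apply, frobInner, Matrix.vec, Real.inner_apply,
    Fintype.sum_prod_type_right]

lemma frobNorm_pos_iff {X : Matrix (Fin N₁) (Fin N₂) ℝ} : 0 < frobNorm X ↔ X ≠ 0 := by
  rw [← norm_toLp_vec, norm_pos_iff, ne_eq, WithLp.toLp_eq_zero, Matrix.vec_eq_zero_iff]

end Frobenius

lemma rank_smul_le {m n R : Type*} [Fintype n] [CommRing R] [StrongRankCondition R] (c : R)
    (X : Matrix m n R) : (c • X).rank ≤ X.rank := by
  classical
  calc (c • X).rank = (X * c • (1 : Matrix n n R)).rank := by rw [Matrix.mul_smul, Matrix.mul_one]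
    _ ≤ X.rank := Matrix.rank_mul_le_left _ _

theorem IsBestRankApprox.abs_frobInner_le {N₁ N₂ k : ℕ} {M W X : Matrix (Fin N₁) (Fin N₂) ℝ}
    (hW : IsBestRankApprox k M W) (hX : X.rank ≤ k) :
    |frobInner M X| ≤ frobNorm W * frobNorm X := by
  have hline (Y : Matrix (Fin N₁) (Fin N₂) ℝ) (hY : Y.rank ≤ k) (c : ℝ) :
      ‖WithLp.toLp 2 M.vec - WithLp.toLp 2 W.vec‖ ≤
        ‖WithLp.toLp 2 M.vec - c • WithLp.toLp 2 Y.vec‖ := by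
    simpa only [← WithLp.toLp_smul, ← WithLp.toLp_sub, ← Matrix.vec_smul, ← Matrix.vec_sub,
      norm_toLp_vec] using hW.2 (c • Y) ((rank_smul_le c Y).trans hY)
  simpa only [inner_toLp_vec, norm_toLp_vec] using
    abs_inner_le_of_forall_norm_sub_le (hline W hW.1) (hline X hX)

lemma real_sign_mul_self (x : ℝ) : Real.sign x * x = |x| := by
  rcases lt_trichotomy x 0 with hx | rfl | hx
  · rw [Real.sign_of_neg hx, abs_of_neg hx, neg_one_mul]
  · rw [mul_zero, abs_zero]
  · rw [Real.sign_of_pos hx, abs_of_pos hx, one_mul]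

lemma sum_sgnVec_mul_self {m : ℕ} (v : Fin m → ℝ) : ∑ i, sgnVec v i * v i = l1norm v :=
  Finset.sum_congr rfl fun i _ ↦ real_sign_mul_self (v i)

lemma l1norm_nonneg {m : ℕ} (v : Fin m → ℝ) : 0 ≤ l1norm v :=
  Finset.sum_nonneg fun i _ ↦ abs_nonneg (v i)

lemma one_div_sq_mul_sq_div_sq_le_sq {a b c : ℝ} (ha : 0 ≤ a) (h : a ≤ c * b ^ 2) :
    1 / c ^ 2 * a ^ 2 / b ^ 2 ≤ b ^ 2 := by
  refine div_le_of_le_mul₀ (sq_nonneg b) (sq_nonneg b) ?_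
  rw [one_div_mul_eq_div]
  refine div_le_of_le_mul₀ (sq_nonneg c) (by positivity) ?_
  calc a ^ 2 ≤ (c * b ^ 2) ^ 2 := by gcongr
    _ = b ^ 2 * b ^ 2 * c ^ 2 := by ring

theorem stmt12_general {N₁ N₂ m : ℕ} (t : ℕ)
    (A : Matrix (Fin N₁) (Fin N₂) ℝ →ₗ[ℝ] (Fin m → ℝ))
    (Astar : (Fin m → ℝ) →ₗ[ℝ] Matrix (Fin N₁) (Fin N₂) ℝ)
    (hadj : ∀ (u : Fin m → ℝ) (X : Matrix (Fin N₁) (Fin N₂) ℝ),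
      frobInner (Astar u) X = ∑ i, u i * A X i)
    (α β : ℝ) (hα : 0 < α)
    (hRIP : ∀ X : Matrix (Fin N₁) (Fin N₂) ℝ, X.rank ≤ t →
      α * frobNorm X ≤ l1norm (A X) ∧ l1norm (A X) ≤ β * frobNorm X)
    (γ : ℝ) (hratio : β / α ≤ γ)
    (Z : Matrix (Fin N₁) (Fin N₂) ℝ) (hZ0 : Z ≠ 0) (hZ : Z.rank ≤ t)
    (W : Matrix (Fin N₁) (Fin N₂) ℝ)
    (hW : IsBestRankApprox t (Astar (sgnVec (A Z))) W) :
    W ≠ 0 ∧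
      (1 / γ ^ 2) * l1norm (A W) ^ 2 / frobNorm W ^ 2 ≤ frobNorm W ^ 2 ∧
      max (frobNorm W ^ 2) ((1 / γ ^ 2) * l1norm (A W) ^ 2 / frobNorm W ^ 2)
        = frobNorm W ^ 2 := by
  have hZpos : 0 < frobNorm Z := frobNorm_pos_iff.mpr hZ0
  have hdual : frobInner (Astar (sgnVec (A Z))) Z = l1norm (A Z) := by
    rw [hadj, sum_sgnVec_mul_self]
  have hαW : α ≤ frobNorm W := by
    refine le_of_mul_le_mul_right ?_ hZpos
    calc α * frobNorm Z ≤ frobInner (Astar (sgnVec (A Z))) Z := hdual ▸ (hRIP Z hZ).1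
      _ ≤ frobNorm W * frobNorm Z := le_of_abs_le (hW.abs_frobInner_le hZ)
  have hWpos : 0 < frobNorm W := hα.trans_le hαW
  have hαβ : α ≤ β := le_of_mul_le_mul_right ((hRIP Z hZ).1.trans (hRIP Z hZ).2) hZpos
  have hγ : 0 ≤ γ := (div_nonneg (hα.le.trans hαβ) hα.le).trans hratio
  have hAW : l1norm (A W) ≤ γ * frobNorm W ^ 2 := by
    calc l1norm (A W) ≤ β * frobNorm W := (hRIP W hW.1).2
      _ ≤ γ * α * frobNorm W := by gcongr; exact (div_le_iff₀ hα).mp hratio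
      _ ≤ γ * frobNorm W * frobNorm W := by gcongr
      _ = γ * frobNorm W ^ 2 := by ring
  have hquot := one_div_sq_mul_sq_div_sq_le_sq (l1norm_nonneg (A W)) hAW
  exact ⟨frobNorm_pos_iff.mp hWpos, hquot, max_eq_left hquot⟩

/-- Under the modified RIP of order t+s+r with ratio ≤ γ, if Z ≠ 0 has rank ≤ s+r and W
is a best rank-t approximation of 𝓐*(sgn(𝓐(Z))), then W ≠ 0 and
(1/(4γ²))·‖𝓐(W)‖₁²/‖W‖_F² ≤ ‖W‖_F²; in particular the maximum of the two equals ‖W‖_F². -/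
theorem stmt12 {N₁ N₂ m : ℕ} (r s t : ℕ) (hr : 0 < r) (hs : 0 < s) (ht : 0 < t)
    (hrs : r ≤ s) (hst : s + r ≤ t) (hdim : t + s + r ≤ min N₁ N₂)
    (A : Matrix (Fin N₁) (Fin N₂) ℝ →ₗ[ℝ] (Fin m → ℝ))
    (Astar : (Fin m → ℝ) →ₗ[ℝ] Matrix (Fin N₁) (Fin N₂) ℝ)
    (hadj : ∀ (u : Fin m → ℝ) (Z : Matrix (Fin N₁) (Fin N₂) ℝ),
      frobInner (Astar u) Z = ∑ i, u i * A Z i)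
    (α β : ℝ) (hα : 0 < α) (hαβ : α ≤ β)
    (hRIP : ∀ Z : Matrix (Fin N₁) (Fin N₂) ℝ, Z.rank ≤ t + s + r →
      α * frobNorm Z ≤ l1norm (A Z) ∧ l1norm (A Z) ≤ β * frobNorm Z)
    (γ : ℝ) (hγ : 1 ≤ γ) (hratio : β / α ≤ γ)
    (Z : Matrix (Fin N₁) (Fin N₂) ℝ) (hZ0 : Z ≠ 0) (hZ : Z.rank ≤ s + r)
    (W : Matrix (Fin N₁) (Fin N₂) ℝ)
    (hW : IsBestRankApprox t (Astar (sgnVec (A Z))) W) :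
    W ≠ 0 ∧
      (1 / (4 * γ ^ 2)) * l1norm (A W) ^ 2 / frobNorm W ^ 2 ≤ frobNorm W ^ 2 ∧
      max (frobNorm W ^ 2) ((1 / (4 * γ ^ 2)) * l1norm (A W) ^ 2 / frobNorm W ^ 2)
        = frobNorm W ^ 2 := by
  rw [show 4 * γ ^ 2 = (2 * γ) ^ 2 by ring]
  exact stmt12_general t A Astar hadj α β hα (fun X hX ↦ hRIP X (by omega)) (2 * γ)
    (by linarith) Z hZ0 (hZ.trans hst) W hW
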